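/- Let α, β ∈ ℂ with β ≠ 0. Then there exist N ∈ ℕ and a sequence (s_n)_{n∈ℕ} of complex numbers such that for all n ≥ N, (α/n)·β·s_n² + ((α/n)·β + α/n − β)·s_n + α/n = 0, and s_n → 0 as n → ∞. -/

import Mathlib

theorem quad_small_root (l β b : ℂ) :
    ∃ s : ℂ, (b ≠ 0 → l * β * s ^ 2 + b * s + l = 0) ∧ ‖s‖ ≤ 2 * ‖l‖ / ‖b‖ := by
  by_cases hb : b = 0
  · exact ⟨0, fun h => absurd hb h, by simp [hb]⟩
  have hd : ∃ d : ℂ, d ^ 2 = b ^ 2 - 4 * l ^ 2 * β ∧ ‖b‖ ≤ ‖b + d‖ := by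
    obtain ⟨d, hd⟩ := IsAlgClosed.exists_pow_nat_eq (b ^ 2 - 4 * l ^ 2 * β) (n := 2) (by norm_num)
    by_cases h : ‖b‖ ≤ ‖b + d‖
    · exact ⟨d, hd, h⟩
    · refine ⟨-d, by rw [neg_sq, hd], ?_⟩
      have h1 : ‖(b + d) + (b + -d)‖ ≤ ‖b + d‖ + ‖b + -d‖ := norm_add_le _ _
      have h2 : (b + d) + (b + -d) = 2 * b := by ring
      rw [h2, norm_mul] at h1
      norm_num at h1 h ⊢
      linarith
  obtain ⟨d, hd, hn⟩ := hd
  have hbp : 0 < ‖b‖ := norm_pos_iff.mpr hb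
  have hne : b + d ≠ 0 := norm_pos_iff.mp (hbp.trans_le hn)
  refine ⟨-(2 * l) / (b + d), fun _ => ?_, ?_⟩
  · field_simp
    linear_combination l * hd
  · rw [norm_div, norm_neg, norm_mul, Complex.norm_ofNat]
    gcongr

/-- **Quadratic asymptotics from the proof of Lemma 5.7**: for `α, β ∈ ℂ` with `β ≠ 0`,
there exist `N ∈ ℕ` and complex numbers `(s_n)` with
`(α/n)β s_n² + ((α/n)β + α/n − β) s_n + α/n = 0` for all `n ≥ N` and `s_n → 0`. -/
theorem stmt_10 (α β : ℂ) (hβ : β ≠ 0) :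
    ∃ (N : ℕ) (s : ℕ → ℂ),
      (∀ n ≥ N,
        (α / (n : ℂ)) * β * s n ^ 2 + ((α / (n : ℂ)) * β + α / (n : ℂ) - β) * s n +
          α / (n : ℂ) = 0) ∧
      Filter.Tendsto s Filter.atTop (nhds 0) := by
  have hl : Filter.Tendsto (fun n : ℕ => α / (n : ℂ)) Filter.atTop (nhds 0) :=
    tendsto_const_div_atTop_nhds_zero_nat α
  have hb : Filter.Tendsto (fun n : ℕ => (α / (n : ℂ)) * β + α / (n : ℂ) - β)
      Filter.atTop (nhds (-β)) := by
    have := ((hl.mul_const β).add hl).sub_const β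
    simpa using this
  choose s hs1 hs2 using fun n : ℕ =>
    quad_small_root (α / (n : ℂ)) β ((α / (n : ℂ)) * β + α / (n : ℂ) - β)
  obtain ⟨N, hN⟩ := Filter.eventually_atTop.mp (hb.eventually_ne (neg_ne_zero.mpr hβ))
  refine ⟨N, s, fun n hn => hs1 n (hN n hn), ?_⟩
  refine squeeze_zero_norm hs2 ?_
  have := (hl.norm.const_mul 2).div hb.norm (by simpa using hβ)
  rw [norm_zero, mul_zero, zero_div] at this
  exact this
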